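/- Let Γ₁ = { (1/3) · Σ_{j=0}^{p} a_j 4^j : p ∈ ℕ, each a_j ∈ {0,1} } ∪ {0}. Then Γ₁ is maximally orthogonal for ν_{3/4}: for every x ∈ ℝ with x ∉ Γ₁, there exists γ ∈ Γ₁ such that x − γ ∉ 𝒪 = {4^{n−1}(2m+1)/3ⁿ : n ∈ ℕ₀, m ∈ ℤ}; i.e., e_x is not orthogonal to e_γ, so no exponential can be added to {e_γ : γ ∈ Γ₁} while preserving pairwise orthogonality. -/

import Mathlib

/-!
For the characteristic function, self-similarity of `ν` reads `φ(t) = cos t · φ(3t / 4)`. Iterating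
this, and using continuity of `φ` at `0`, shows that `φ(2πt) = 0` only if
`cos ((3 / 4) ^ n * 2πt) = 0` for some `n`, that is, only if `t ∈ 𝒪`. So it suffices to find
`γ ∈ Γ₁` with `x - γ ∉ 𝒪`.

If both `x` and `x - 1 / 3` lie in `𝒪`, comparing them modulo 2 and modulo 3 shows that `3x` is an
integer `y`. For integers, `y / 3 ∈ 𝒪` forces `y` to be a power of 4 times an odd number, so we want
a sum `g` of distinct powers of 4 for which `y - g` is not of this form. Choose the digits of `g` to
cancel the trailing base 4 digits `0` and `1` of `y`. Either nothing remains, or one meets a digit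
`2` or `3`, and then the digit `0` or `1` of `g` leaves a power of 4 times a number congruent to 2
modulo 4.
-/

open MeasureTheory
open scoped ENNReal

/-- The set `𝒪 = {4^{n−1}(2m+1)/3ⁿ : n ∈ ℕ₀, m ∈ ℤ} = {(1/4)(4/3)ⁿ(2m+1) : n ∈ ℕ₀, m ∈ ℤ}`. -/
def OsetThreeFourths : Set ℝ :=
  {x : ℝ | ∃ (n : ℕ) (m : ℤ), x = (1 / 4) * (4 / 3 : ℝ) ^ n * (2 * (m : ℝ) + 1)}

/-- The set `Γ₁ = {(1/3) Σ_{j=0}^{p} a_j 4^j : p ∈ ℕ, a_j ∈ {0,1}} ∪ {0}`. -/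
def GamOne : Set ℝ :=
  {x : ℝ | ∃ p : ℕ, ∃ a : ℕ → ℕ, (∀ j, a j = 0 ∨ a j = 1) ∧
    x = (1 / 3 : ℝ) * ∑ j ∈ Finset.range (p + 1), (a j : ℝ) * (4 : ℝ) ^ j} ∪ {0}

section CharFun

variable {E : Type*} [MeasurableSpace E] [NormedAddCommGroup E] [InnerProductSpace ℝ E]

theorem charFun_add_measure [OpensMeasurableSpace E] (μ ν : Measure E) [IsFiniteMeasure μ]
    [IsFiniteMeasure ν] (t : E) : charFun (μ + ν) t = charFun μ t + charFun ν t := by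
  simp only [charFun_eq_integral_innerProbChar]
  exact integral_add_measure ((BoundedContinuousFunction.innerProbChar t).integrable μ)
    ((BoundedContinuousFunction.innerProbChar t).integrable ν)

theorem charFun_smul_measure (c : ℝ≥0∞) (μ : Measure E) (t : E) :
    charFun (c • μ) t = c.toReal • charFun μ t :=
  integral_smul_measure _ c

theorem charFun_map_mul_add_const (μ : Measure ℝ) (r b t : ℝ) :
    charFun (μ.map fun x ↦ r * x + b) t = charFun μ (r * t) * Complex.exp (t * b * Complex.I) := by
  have hmap : μ.map (fun x ↦ r * x + b) = (μ.map (r * ·)).map (· + b) :=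
    (Measure.map_map (measurable_add_const b) (measurable_const_mul r)).symm
  rw [hmap, charFun_map_add_const, charFun_map_mul]
  simp

theorem integral_exp_mul_conj_exp (μ : Measure ℝ) (x γ : ℝ) :
    ∫ y : ℝ, Complex.exp (2 * Real.pi * Complex.I * x * y)
        * (starRingEnd ℂ) (Complex.exp (2 * Real.pi * Complex.I * γ * y)) ∂μ
      = charFun μ (2 * Real.pi * (x - γ)) := by
  rw [charFun_apply_real]
  congr with y
  rw [← Complex.exp_conj, ← Complex.exp_add]
  congr 1
  simp only [map_mul, Complex.conj_ofReal, Complex.conj_I, map_ofNat]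
  push_cast
  ring

end CharFun

/-- Self-similarity of a Bernoulli convolution of ratio `r`: `ν` is the average of its images under
`x ↦ r * x + 1` and `x ↦ r * x - 1`. For `|r| < 1` the only such probability measure is the law
of `∑ ± r ^ n` with independent fair signs. -/
def IsBernoulliConvolution (r : ℝ) (ν : Measure ℝ) : Prop :=
  ν = (1 / 2 : ℝ≥0∞) • ν.map (fun x ↦ r * x + 1) + (1 / 2 : ℝ≥0∞) • ν.map (fun x ↦ r * x - 1)

namespace IsBernoulliConvolution

variable {r : ℝ} {ν : Measure ℝ} [IsFiniteMeasure ν]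

theorem charFun_eq (h : IsBernoulliConvolution r ν) (t : ℝ) :
    charFun ν t = Real.cos t * charFun ν (r * t) := by
  have half_ne_top : (1 / 2 : ℝ≥0∞) ≠ ⊤ := by simp
  have (f : ℝ → ℝ) : IsFiniteMeasure ((1 / 2 : ℝ≥0∞) • ν.map f) :=
    Measure.smul_finite _ half_ne_top
  calc charFun ν t
    _ = (1 / 2 : ℝ≥0∞).toReal • charFun (ν.map fun x ↦ r * x + 1) t
        + (1 / 2 : ℝ≥0∞).toReal • charFun (ν.map fun x ↦ r * x + -1) t := by
      conv_lhs => rw [h]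
      simp only [charFun_add_measure, charFun_smul_measure, sub_eq_add_neg]
    _ = (Complex.exp (t * Complex.I) + Complex.exp (-t * Complex.I)) / 2 * charFun ν (r * t) := by
      simp only [charFun_map_mul_add_const, one_div, ENNReal.toReal_inv, ENNReal.toReal_ofNat,
        Complex.real_smul]
      push_cast
      ring_nf
    _ = Real.cos t * charFun ν (r * t) := by rw [Complex.ofReal_cos, Complex.cos]

theorem charFun_eq_prod_mul (h : IsBernoulliConvolution r ν) (t : ℝ) (n : ℕ) :
    charFun ν t = (∏ i ∈ Finset.range n, (Real.cos (r ^ i * t) : ℂ)) * charFun ν (r ^ n * t) := by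
  induction n with
  | zero => simp
  | succ n ih =>
    rw [ih, h.charFun_eq (r ^ n * t), Finset.prod_range_succ, pow_succ', mul_assoc, mul_assoc r]

theorem exists_cos_eq_zero [NeZero ν] (h : IsBernoulliConvolution r ν) (hr : |r| < 1) {t : ℝ}
    (ht : charFun ν t = 0) : ∃ n : ℕ, Real.cos (r ^ n * t) = 0 := by
  have tendsto_charFun : Filter.Tendsto (fun n : ℕ ↦ charFun ν (r ^ n * t)) Filter.atTop
      (nhds (charFun ν 0)) := by
    refine (continuous_charFun.tendsto 0).comp ?_
    simpa only [zero_mul] using (tendsto_pow_atTop_nhds_zero_of_abs_lt_one hr).mul_const t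
  have charFun_zero_ne_zero : charFun ν 0 ≠ 0 := by
    simpa only [charFun_zero, Complex.ofReal_ne_zero] using measureReal_univ_ne_zero
  obtain ⟨n, hn⟩ := (tendsto_charFun.eventually_ne charFun_zero_ne_zero).exists
  rw [h.charFun_eq_prod_mul t n] at ht
  obtain ⟨i, -, hi⟩ := Finset.prod_eq_zero_iff.1 ((mul_eq_zero.1 ht).resolve_right hn)
  exact ⟨i, Complex.ofReal_eq_zero.1 hi⟩

end IsBernoulliConvolution

/-- The sums of distinct powers of 4 (the Moser–de Bruijn numbers), as integers. They are the
elements of `GamOne` multiplied by 3. -/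
def distinctFourPowSums : Set ℤ :=
  Set.range fun s : Finset ℕ ↦ ∑ j ∈ s, 4 ^ j

theorem zero_mem_distinctFourPowSums : 0 ∈ distinctFourPowSums := ⟨∅, rfl⟩

theorem one_mem_distinctFourPowSums : 1 ∈ distinctFourPowSums := ⟨{0}, rfl⟩

theorem four_mul_mem_distinctFourPowSums {g : ℤ} (hg : g ∈ distinctFourPowSums) :
    4 * g ∈ distinctFourPowSums := by
  obtain ⟨s, rfl⟩ := hg
  refine ⟨s.map (addRightEmbedding 1), ?_⟩
  simp only [Finset.sum_map, addRightEmbedding_apply, pow_succ', Finset.mul_sum]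

theorem four_mul_add_one_mem_distinctFourPowSums {g : ℤ} (hg : g ∈ distinctFourPowSums) :
    4 * g + 1 ∈ distinctFourPowSums := by
  obtain ⟨s, rfl⟩ := hg
  refine ⟨insert 0 (s.map (addRightEmbedding 1)), ?_⟩
  have zero_notMem : 0 ∉ s.map (addRightEmbedding 1) := by simp
  simp only [Finset.sum_insert zero_notMem, Finset.sum_map, addRightEmbedding_apply, pow_succ',
    pow_zero, Finset.mul_sum, add_comm]

theorem intCast_div_three_mem_gamOne {g : ℤ} (hg : g ∈ distinctFourPowSums) :
    (g : ℝ) / 3 ∈ GamOne := by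
  obtain ⟨s, rfl⟩ := hg
  refine Or.inl ⟨s.sup id, fun j ↦ if j ∈ s then 1 else 0, fun j ↦ (ite_eq_or_eq ..).symm, ?_⟩
  have inter_eq : Finset.range (s.sup id + 1) ∩ s = s :=
    Finset.inter_eq_right.2 s.subset_range_sup_succ
  simp only [Nat.cast_ite, Nat.cast_one, Nat.cast_zero, ite_mul, one_mul, zero_mul,
    Finset.sum_ite_mem, inter_eq]
  push_cast
  ring

/-- The integers `4 ^ k * u` with `u` odd, that is, the nonzero integers of even 2-adic
valuation. -/
def IsFourPowMulOdd (y : ℤ) : Prop :=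
  ∃ (k : ℕ) (u : ℤ), Odd u ∧ y = 4 ^ k * u

namespace IsFourPowMulOdd

variable {y : ℤ}

theorem ne_zero (h : IsFourPowMulOdd y) : y ≠ 0 := by
  obtain ⟨k, u, hu, rfl⟩ := h
  exact mul_ne_zero (by positivity) (by rintro rfl; exact absurd hu (by decide))

theorem odd_or_exists_eq_four_mul (h : IsFourPowMulOdd y) :
    Odd y ∨ ∃ z, IsFourPowMulOdd z ∧ y = 4 * z := by
  obtain ⟨_ | k, u, hu, rfl⟩ := h
  · exact Or.inl (by simpa only [pow_zero, one_mul] using hu)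
  · exact Or.inr ⟨4 ^ k * u, ⟨k, u, hu, rfl⟩, by ring⟩

theorem of_four_mul (h : IsFourPowMulOdd (4 * y)) : IsFourPowMulOdd y := by
  obtain hodd | ⟨z, hz, hyz⟩ := h.odd_or_exists_eq_four_mul
  · grind
  · rwa [mul_left_cancel₀ four_ne_zero hyz]

theorem emod_four_ne_two (h : IsFourPowMulOdd y) : y % 4 ≠ 2 := by
  obtain ⟨u, rfl⟩ | ⟨z, -, rfl⟩ := h.odd_or_exists_eq_four_mul <;> lia

theorem of_three_pow_mul {k : ℕ} {u : ℤ} (hu : Odd u) (h : 3 ^ k * y = 4 ^ k * u) :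
    IsFourPowMulOdd y := by
  have hcop : IsCoprime ((4 : ℤ) ^ k) (3 ^ k) := IsCoprime.pow ⟨1, -1, by norm_num⟩
  obtain ⟨c, rfl⟩ : (4 : ℤ) ^ k ∣ y := hcop.dvd_of_dvd_mul_left ⟨u, h⟩
  have hc : 3 ^ k * c = u := by
    apply mul_left_cancel₀ (pow_ne_zero k (four_ne_zero (α := ℤ)))
    rw [← h]
    ring
  exact ⟨k, c, (Int.odd_mul.1 (hc ▸ hu)).2, rfl⟩

end IsFourPowMulOdd

theorem exists_not_isFourPowMulOdd_sub (y : ℤ) :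
    ∃ g ∈ distinctFourPowSums, ¬ IsFourPowMulOdd (y - g) := by
  induction hN : y.natAbs using Nat.strong_induction_on generalizing y with
  | _ N ih =>
    by_cases hy : y = 0
    · exact ⟨0, zero_mem_distinctFourPowSums, fun h ↦ h.ne_zero (by lia)⟩
    obtain h | h | h | h : y % 4 = 0 ∨ y % 4 = 1 ∨ y % 4 = 2 ∨ y % 4 = 3 := by lia
    · obtain ⟨g, hg, hyg⟩ := ih (y / 4).natAbs (by lia) (y / 4) rfl
      refine ⟨4 * g, four_mul_mem_distinctFourPowSums hg, fun hsub ↦ hyg (.of_four_mul ?_)⟩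
      rwa [show 4 * (y / 4 - g) = y - 4 * g by lia]
    · obtain ⟨g, hg, hyg⟩ := ih (y / 4).natAbs (by lia) (y / 4) rfl
      refine ⟨4 * g + 1, four_mul_add_one_mem_distinctFourPowSums hg,
        fun hsub ↦ hyg (.of_four_mul ?_)⟩
      rwa [show 4 * (y / 4 - g) = y - (4 * g + 1) by lia]
    · exact ⟨0, zero_mem_distinctFourPowSums, fun hsub ↦ hsub.emod_four_ne_two (by lia)⟩
    · exact ⟨1, one_mem_distinctFourPowSums, fun hsub ↦ hsub.emod_four_ne_two (by lia)⟩

theorem mem_osetThreeFourths_of_cos_eq_zero {t : ℝ} {n : ℕ}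
    (h : Real.cos ((3 / 4) ^ n * (2 * Real.pi * t)) = 0) : t ∈ OsetThreeFourths := by
  obtain ⟨m, hm⟩ := Real.cos_eq_zero_iff.1 h
  have ht : (3 / 4 : ℝ) ^ n * t = (2 * m + 1) / 4 := by
    apply mul_left_cancel₀ Real.pi_ne_zero
    linear_combination hm / 2
  have hpow : (4 / 3 : ℝ) ^ n * (3 / 4) ^ n = 1 := by
    rw [← mul_pow]
    norm_num
  exact ⟨n, m, by linear_combination (4 / 3 : ℝ) ^ n * ht - t * hpow⟩

theorem exists_odd_of_mem_osetThreeFourths {t : ℝ} (ht : t ∈ OsetThreeFourths) :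
    ∃ (n : ℕ) (u : ℤ), Odd u ∧ 4 * 3 ^ n * t = 4 ^ n * u := by
  obtain ⟨n, m, rfl⟩ := ht
  refine ⟨n, 2 * m + 1, odd_two_mul_add_one m, ?_⟩
  rw [div_pow]
  push_cast
  field_simp

theorem isFourPowMulOdd_of_div_three_mem_osetThreeFourths {y : ℤ}
    (h : (y : ℝ) / 3 ∈ OsetThreeFourths) : IsFourPowMulOdd y := by
  obtain ⟨n, u, hu, heq⟩ := exists_odd_of_mem_osetThreeFourths h
  have hint : 4 * 3 ^ n * y = 3 * 4 ^ n * u := by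
    have : (4 * 3 ^ n * y : ℝ) = 3 * 4 ^ n * u := by linear_combination 3 * heq
    exact_mod_cast this
  cases n with
  | zero => grind
  | succ k =>
    refine .of_three_pow_mul (k := k) hu (mul_left_cancel₀ (by norm_num : (12 : ℤ) ≠ 0) ?_)
    linear_combination hint

theorem three_pow_mul_ne_four_mul {u : ℤ} (hu : Odd u) (k : ℕ) (z : ℤ) : 3 ^ k * u ≠ 4 * z := by
  intro h
  have hodd : Odd (3 ^ k * u) := (Odd.pow (by decide)).mul hu
  have heven : Even (4 * z) := Even.mul_right (by decide) z
  exact Int.not_even_iff_odd.2 hodd (h ▸ heven)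

/-- The equation says that `4 ^ (m - 1) * u / 3 ^ m` and `4 ^ (n - 1) * v / 3 ^ n` differ
by `1 / 3`. -/
theorem eq_one_or_eq_one_of_three_mul_sub_eq {m n : ℕ} {u v : ℤ} (hu : Odd u) (hv : Odd v)
    (h : 3 * (4 ^ m * 3 ^ n * u - 4 ^ n * 3 ^ m * v) = 4 * 3 ^ (m + n)) : m = 1 ∨ n = 1 := by
  match m, n with
  | 0, 0 => lia
  | 0, n + 1 =>
    refine absurd ?_ (three_pow_mul_ne_four_mul hu (n + 2) (3 * 4 ^ n * v + 3 ^ (n + 1)))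
    linear_combination h
  | m + 1, 0 =>
    refine absurd ?_ (three_pow_mul_ne_four_mul hv (m + 2) (3 * 4 ^ m * u - 3 ^ (m + 1)))
    linear_combination -h
  | 1, _ + 1 => exact Or.inl rfl
  | _ + 2, 1 => exact Or.inr rfl
  | m + 2, n + 2 =>
    refine absurd ?_ (three_pow_mul_ne_four_mul odd_one (m + n + 4)
      (3 * (4 ^ m * 3 ^ (n + 2) * u - 4 ^ n * 3 ^ (m + 2) * v)))
    apply mul_left_cancel₀ (four_ne_zero (α := ℤ))
    linear_combination -h

theorem exists_eq_intCast_div_three {t : ℝ} (h : t ∈ OsetThreeFourths)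
    (h' : t - 1 / 3 ∈ OsetThreeFourths) : ∃ y : ℤ, t = y / 3 := by
  obtain ⟨m, u, hu, hmu⟩ := exists_odd_of_mem_osetThreeFourths h
  obtain ⟨n, v, hv, hnv⟩ := exists_odd_of_mem_osetThreeFourths h'
  have hdiff : 3 * (4 ^ m * 3 ^ n * u - 4 ^ n * 3 ^ m * v) = 4 * 3 ^ (m + n) := by
    have : (3 * (4 ^ m * 3 ^ n * u - 4 ^ n * 3 ^ m * v) : ℝ) = 4 * 3 ^ (m + n) := by
      linear_combination 3 * 3 ^ m * hnv - 3 * 3 ^ n * hmu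
    exact_mod_cast this
  obtain rfl | rfl := eq_one_or_eq_one_of_three_mul_sub_eq hu hv hdiff
  · exact ⟨u, by linear_combination hmu / 12⟩
  · exact ⟨v + 1, by push_cast; linear_combination hnv / 12⟩

theorem exists_mem_gamOne_sub_notMem_osetThreeFourths (x : ℝ) :
    ∃ γ ∈ GamOne, x - γ ∉ OsetThreeFourths := by
  by_contra! hx
  replace hx {g : ℤ} (hg : g ∈ distinctFourPowSums) : x - g / 3 ∈ OsetThreeFourths :=
    hx _ (intCast_div_three_mem_gamOne hg)
  obtain ⟨y, rfl⟩ : ∃ y : ℤ, x = y / 3 :=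
    exists_eq_intCast_div_three (by simpa using hx zero_mem_distinctFourPowSums)
      (by simpa using hx one_mem_distinctFourPowSums)
  obtain ⟨g, hg, hyg⟩ := exists_not_isFourPowMulOdd_sub y
  refine hyg (isFourPowMulOdd_of_div_three_mem_osetThreeFourths ?_)
  rw [Int.cast_sub, sub_div]
  exact hx hg

/-- `Γ₁` is maximally orthogonal for `ν_{3/4}`: for every `x ∉ Γ₁` there is `γ ∈ Γ₁`
with `x − γ ∉ 𝒪`, i.e. `e_x` is not orthogonal to `e_γ`, so no exponential can be added
to `{e_γ : γ ∈ Γ₁}` while preserving pairwise orthogonality. -/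
theorem gamOne_maximally_orthogonal
    (ν : Measure ℝ) [IsProbabilityMeasure ν]
    (hatom : ∀ x : ℝ, ν {x} = 0)
    (hinv : ν = (1 / 2 : ℝ≥0∞) • Measure.map (fun x : ℝ => (3 / 4 : ℝ) * x + 1) ν
              + (1 / 2 : ℝ≥0∞) • Measure.map (fun x : ℝ => (3 / 4 : ℝ) * x - 1) ν)
    (x : ℝ) (hx : x ∉ GamOne) :
    ∃ γ ∈ GamOne, x - γ ∉ OsetThreeFourths ∧
      (∫ y : ℝ, Complex.exp (2 * Real.pi * Complex.I * x * y)
        * (starRingEnd ℂ) (Complex.exp (2 * Real.pi * Complex.I * γ * y)) ∂ν) ≠ 0 := by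
  have hν : IsBernoulliConvolution (3 / 4) ν := hinv
  obtain ⟨γ, hγ, hxγ⟩ := exists_mem_gamOne_sub_notMem_osetThreeFourths x
  refine ⟨γ, hγ, hxγ, fun hzero ↦ hxγ ?_⟩
  rw [integral_exp_mul_conj_exp] at hzero
  have ratio_lt_one : |(3 / 4 : ℝ)| < 1 := by norm_num [abs_lt]
  obtain ⟨n, hn⟩ := hν.exists_cos_eq_zero ratio_lt_one hzero
  exact mem_osetThreeFourths_of_cos_eq_zero hn
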